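/- arXiv:2503.23973 — 2 statements merged into one kernel-verified Lean document; each statement's English description precedes it below -/
import Mathlib

section
/- Let (G,T) be a bipartite graft, F a minimum join of (G,T), and r ∈ V(G). Let K be a decapital distance component of (G,T) with respect to r, with F-antiroot s_K. Then K is a connected component of the subgraph of G induced by {x ∈ V(G) : dist_F(s_K, x) ≤ −1}; in particular, K is a decapital distance component of (G,T) with respect to s_K. -/
/-!
Edge sets are handled modulo 2 through their boundary `bd`. With `b = bd F + pt r`, the `x`-joins,
i.e. the edge sets of boundary `b + pt x`, are the sets `F ∆ Z` where `Z` is an `{r, x}`-join, and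
their minimum size is `|F| + dist_F(r, x)` (`MinJ.mem_lev`). The distance components with respect
to `r` are therefore components of level sets of the function sending `x` to the minimum size of an
`x`-join, a description in which no minimum join or root is singled out.

The heart of the proof is a root-free form of Sebő's theorem (`sebo`): if `L` is a component of such
a level set, then every minimum `x`-join meets the cut of `L` at most once, and if `s` and `y` are
neighbours of `L` outside the level set, then adding an `{s, y}`-join modulo 2 to a minimum `x`-join
does not lower its cost. It is proved for 0/1 edge weights by induction on the level. Take a join `F`
of minimum cost over all `x`, say a `t`-join, and let `Q` be the set of vertices connected to `t` at
weight 0. Setting the weight of the cut of `Q` to 0 (in effect, contracting the star of `Q`) lowers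
the minimum cost by exactly one outside `Q` and leaves it unchanged on `Q`
(`Star.exists_expand`, together with the parity of cuts). Thus minimum joins stay minimum, and every
level set above the lowest reappears one level lower. At the lowest level, the component of `t` is
`Q` itself and both claims are parity statements about its cut (`Star.sebo_base`).

For the theorem, let `x ∈ K` and let `P` be a path of minimum `F`-weight from `r` to `x`. Both `F`
and the minimum `x`-join `F ∆ P` meet the cut of `K` at most once, `F` in the beam, and `P` crosses
it an odd number of times, so `F ∆ P` avoids the cut and `P` contains the beam, hence `sK`. The part of `P` up to `sK`
has weight greater than the level of `K`, so the remaining part has weight at most `-1`. Conversely,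
a neighbour `y ∉ K` of `K` at `F`-distance at most `-1` from `sK` would contradict the second half of
Sebő's theorem for the minimum join `F` and the vertices `sK` and `y`.
-/

namespace TightCuts

open SimpleGraph

variable {V : Type*}

/-- `(G, T)` is a graft: every connected component of `G` contains an even
number of vertices of `T`. -/
def IsGraft (G : SimpleGraph V) (T : Set V) : Prop :=
  ∀ c : G.ConnectedComponent, Even ((T ∩ {v | G.connectedComponentMk v = c}).ncard)

/-- `F` is a join of the graft `(G, T)`: a set of edges such that a vertex is
incident with an odd number of edges of `F` exactly when it lies in `T`. -/
def IsJoin (G : SimpleGraph V) (T : Set V) (F : Set (Sym2 V)) : Prop :=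
  F ⊆ G.edgeSet ∧ ∀ v : V, (Odd ({e ∈ F | v ∈ e}).ncard ↔ v ∈ T)

/-- `ν(G, T)`: the minimum size of a join of `(G, T)`. -/
noncomputable def nu (G : SimpleGraph V) (T : Set V) : ℕ :=
  sInf {n | ∃ F : Set (Sym2 V), IsJoin G T F ∧ F.ncard = n}

/-- `F` is a minimum join of `(G, T)`. -/
def IsMinJoin (G : SimpleGraph V) (T : Set V) (F : Set (Sym2 V)) : Prop :=
  IsJoin G T F ∧ F.ncard = nu G T

open Classical in
/-- The `F`-weight of an edge: `-1` if the edge lies in `F`, `+1` otherwise. -/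
noncomputable def edgeWt (F : Set (Sym2 V)) (e : Sym2 V) : ℤ :=
  if e ∈ F then -1 else 1

/-- The `F`-weight of a walk: the sum of the `F`-weights of its edges. -/
noncomputable def walkWt (F : Set (Sym2 V)) {G : SimpleGraph V} {x y : V}
    (p : G.Walk x y) : ℤ :=
  (p.edges.map (edgeWt F)).sum

/-- The `F`-distance between `x` and `y`: the minimum `F`-weight of a path
between `x` and `y`. -/
noncomputable def distF (G : SimpleGraph V) (F : Set (Sym2 V)) (x y : V) : ℤ :=
  sInf {n : ℤ | ∃ p : G.Walk x y, p.IsPath ∧ walkWt F p = n}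

/-- `K` is (the vertex set of) a connected component of the subgraph of `G`
induced by `U`. -/
def IsComponentOf (G : SimpleGraph V) (U K : Set V) : Prop :=
  K.Nonempty ∧ K ⊆ U ∧ (G.induce K).Connected ∧
    ∀ x ∈ K, ∀ y ∈ U, G.Adj x y → y ∈ K

/-- `K` is a distance component of the graft with respect to root `r` at level `i`
(with respect to a minimum join `F`): `i` is attained as an `F`-distance from `r`,
and `K` is a connected component of the subgraph induced by the vertices at
`F`-distance at most `i` from `r`. -/
def IsDistCompAt (G : SimpleGraph V) (F : Set (Sym2 V)) (r : V) (i : ℤ) (K : Set V) : Prop :=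
  (∃ x, distF G F r x = i) ∧ IsComponentOf G {x | distF G F r x ≤ i} K

/-- `K` is a decapital distance component with respect to root `r`: a distance
component (at some level) not containing `r`. -/
def IsDecapDistComp (G : SimpleGraph V) (F : Set (Sym2 V)) (r : V) (K : Set V) : Prop :=
  ∃ i : ℤ, IsDistCompAt G F r i K ∧ r ∉ K

/-- The edge cut `δ_G(K)`: edges of `G` with exactly one end in `K`. -/
def cutEdges (G : SimpleGraph V) (K : Set V) : Set (Sym2 V) :=
  {e | e ∈ G.edgeSet ∧ ∃ x y, e = s(x, y) ∧ x ∈ K ∧ y ∉ K}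

/-- An edge is allowed in `(G, T)` if some minimum join contains it. -/
def Allowed (G : SimpleGraph V) (T : Set V) (e : Sym2 V) : Prop :=
  ∃ F, IsMinJoin G T F ∧ e ∈ F

/-- Two vertices are factor-connected if there is a walk between them all of
whose edges are allowed. -/
def FactorConnected (G : SimpleGraph V) (T : Set V) (u v : V) : Prop :=
  ∃ p : G.Walk u v, ∀ e ∈ p.edges, Allowed G T e

/-- `C` is (the vertex set of) a factor-component of `(G, T)`: an equivalence
class of factor-connectivity. -/
def IsFactorComponent (G : SimpleGraph V) (T : Set V) (C : Set V) : Prop :=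
  ∃ v, C = {u | FactorConnected G T u v}

/-- The Kotzig–Lovász relation: `u ∼ v` iff `u = v`, or `u` and `v` are
factor-connected (hence in the same factor-component) and
`ν(G, T) = ν(G, T Δ {u, v})`. -/
def klRel (G : SimpleGraph V) (T : Set V) (u v : V) : Prop :=
  u = v ∨ (FactorConnected G T u v ∧ nu G T = nu G (symmDiff T {u, v}))

/-- `S` is a Kotzig–Lovász class of `(G, T)`. -/
def IsKLClass (G : SimpleGraph V) (T : Set V) (S : Set V) : Prop :=
  ∃ v, S = {u | klRel G T u v}

/-- `A(K)` for a distance component `K` at level `i`: the vertices of `K` at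
`F`-distance exactly `i` from `r`. -/
def AK (G : SimpleGraph V) (F : Set (Sym2 V)) (r : V) (i : ℤ) (K : Set V) : Set V :=
  K ∩ {x | distF G F r x = i}

/-- `D(K) = V(K) \ A(K)`. -/
def DK (G : SimpleGraph V) (F : Set (Sym2 V)) (r : V) (i : ℤ) (K : Set V) : Set V :=
  K \ AK G F r i K

/-- `S` is the root class of `K`: a Kotzig–Lovász class containing all ends in
`K` of allowed edges of the cut `δ_G(K)`. -/
def IsRootClass (G : SimpleGraph V) (T : Set V) (K S : Set V) : Prop :=
  IsKLClass G T S ∧ ∀ e ∈ cutEdges G K, Allowed G T e → ∀ u ∈ e, u ∈ K → u ∈ S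

/-- `S` is the antiroot class of `K`: a Kotzig–Lovász class containing all ends
outside `K` of allowed edges of the cut `δ_G(K)`. -/
def IsAntirootClass (G : SimpleGraph V) (T : Set V) (K S : Set V) : Prop :=
  IsKLClass G T S ∧ ∀ e ∈ cutEdges G K, Allowed G T e → ∀ u ∈ e, u ∉ K → u ∈ S

/-- The family `𝒜(K)`: the root fragment `K ∩ S_K` together with all
Kotzig–Lovász classes other than `S_K` that contain a vertex of `A(K)`. -/
def famA (G : SimpleGraph V) (T : Set V) (F : Set (Sym2 V)) (r : V) (i : ℤ)
    (K S_K : Set V) : Set (Set V) :=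
  insert (K ∩ S_K) {S | IsKLClass G T S ∧ S ≠ S_K ∧ (S ∩ AK G F r i K).Nonempty}

/-- `L` is adjacent to a vertex of `S` by an allowed edge. -/
def AdjAllowed (G : SimpleGraph V) (T : Set V) (L S : Set V) : Prop :=
  ∃ x ∈ L, ∃ s ∈ S, G.Adj x s ∧ Allowed G T s(x, s)

/-- `𝒩_K(S)`: the family of connected components of `G[D(K)]` adjacent to a
vertex of `S` by an allowed edge. -/
def NKfam (G : SimpleGraph V) (T : Set V) (F : Set (Sym2 V)) (r : V) (i : ℤ)
    (K S : Set V) : Set (Set V) :=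
  {L | IsComponentOf G (DK G F r i K) L ∧ AdjAllowed G T L S}

/-- `U_K(S)`: the union of the vertex sets of the members of `𝒩_K(S)`. -/
def UK (G : SimpleGraph V) (T : Set V) (F : Set (Sym2 V)) (r : V) (i : ℤ)
    (K S : Set V) : Set V :=
  ⋃₀ NKfam G T F r i K S

/-- `X` is an `F`-negative set for `S`: `X` is disjoint from `S` and every
`x ∈ X` admits a path of negative `F`-weight from `x` to a vertex of `S` whose
vertices, except the end in `S`, all lie in `X`. -/
def IsNegSet (G : SimpleGraph V) (F : Set (Sym2 V)) (S X : Set V) : Prop :=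
  X ⊆ Sᶜ ∧ ∀ x ∈ X, ∃ y ∈ S, ∃ p : G.Walk x y, p.IsPath ∧ walkWt F p < 0 ∧
    ∀ v ∈ p.support, v ≠ y → v ∈ X

/-- The maximum `F`-negative set for `S`: the union of all `F`-negative sets
for `S`. -/
def maxNegSet (G : SimpleGraph V) (F : Set (Sym2 V)) (S : Set V) : Set V :=
  ⋃₀ {X | IsNegSet G F S X}

/-- The maximum `F`-negative set for `S` avoiding `Y`. -/
def maxNegSetAvoiding (G : SimpleGraph V) (F : Set (Sym2 V)) (S Y : Set V) : Set V :=
  ⋃₀ {X | IsNegSet G F S X ∧ Disjoint X Y}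

/-! ### Edge sets modulo 2 -/

section Joins
open Classical
open scoped symmDiff

/-- The boundary of an edge set modulo 2: the parity of the degree of each vertex. -/
noncomputable def bd (Z : Finset (Sym2 V)) : V → ZMod 2 :=
  fun v => ∑ e ∈ Z, if v ∈ e then 1 else 0

/-- The indicator function of `{x}` modulo 2. Thus `bd Z = pt x + pt y` says that `Z` is an
`{x, y}`-join, and that `Z` is an even edge set if `x = y`. -/
noncomputable def pt (x : V) : V → ZMod 2 := Pi.single x 1

/-- The edges of `Z` with exactly one end in `C`. -/
noncomputable def cut (C : Set V) (Z : Finset (Sym2 V)) : Finset (Sym2 V) :=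
  Z.filter fun e => ∃ a ∈ C, ∃ c ∉ C, e = s(a, c)

lemma mem_cut {C : Set V} {Z : Finset (Sym2 V)} {e : Sym2 V} :
    e ∈ cut C Z ↔ e ∈ Z ∧ ∃ a ∈ C, ∃ c ∉ C, e = s(a, c) := by
  simp [cut]

lemma sum_symmDiff_zmod (Z W : Finset (Sym2 V)) (f : Sym2 V → ZMod 2) :
    ∑ e ∈ Z ∆ W, f e = ∑ e ∈ Z, f e + ∑ e ∈ W, f e := by
  have h1 : ∀ A : Finset (Sym2 V), A ⊆ Z ∪ W →
      ∑ e ∈ A, f e = ∑ e ∈ Z ∪ W, if e ∈ A then f e else 0 := by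
    intro A hA
    rw [← Finset.sum_filter, Finset.filter_mem_eq_inter, Finset.inter_eq_right.2 hA]
  rw [h1 (Z ∆ W) (by intro e; simp [Finset.mem_symmDiff]; tauto), h1 Z Finset.subset_union_left,
    h1 W Finset.subset_union_right, ← Finset.sum_add_distrib]
  refine Finset.sum_congr rfl fun e _ => ?_
  have : f e + f e = 0 := CharTwo.add_self_eq_zero _
  by_cases hz : e ∈ Z <;> by_cases hw : e ∈ W <;> simp [Finset.mem_symmDiff, hz, hw, this]

lemma bd_symmDiff (Z W : Finset (Sym2 V)) : bd (Z ∆ W) = bd Z + bd W := by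
  funext v
  exact sum_symmDiff_zmod _ _ _

lemma bd_edge {a c : V} (h : a ≠ c) : bd {s(a, c)} = pt a + pt c := by
  funext v
  by_cases h1 : v = a
  · subst h1; simp only [bd, Finset.sum_singleton]; simp [pt, h]
  · by_cases h2 : v = c
    · subst h2; simp only [bd, Finset.sum_singleton]; simp [pt, h1]
    · simp only [bd, Finset.sum_singleton]; simp [pt, h1, h2]

@[simp] lemma bd_empty : bd (∅ : Finset (Sym2 V)) = 0 := by
  funext v; simp [bd]

lemma vadd_self (f : V → ZMod 2) : f + f = 0 := by
  funext v; exact CharTwo.add_self_eq_zero _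

/-- Handshake lemma: the cut of `C` has the parity of the degree sum over `C`. -/
lemma cut_parity [Fintype V] (C : Set V) {Z : Finset (Sym2 V)} (hZ : ∀ e ∈ Z, ¬ e.IsDiag) :
    ((cut C Z).card : ZMod 2) = ∑ v with v ∈ C, bd Z v := by
  unfold bd
  rw [Finset.sum_comm, cut, Finset.card_filter, Nat.cast_sum]
  refine Finset.sum_congr rfl fun e he => ?_
  have hd := hZ e he
  induction e with | _ a c =>
  have hac : a ≠ c := by simpa using hd
  have key : (∑ v with v ∈ C, if v ∈ s(a, c) then (1 : ZMod 2) else 0)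
      = (if a ∈ C then 1 else 0) + (if c ∈ C then 1 else 0) := by
    have : ∀ v, (if v ∈ s(a, c) then (1 : ZMod 2) else 0)
        = (if v = a then 1 else 0) + (if v = c then 1 else 0) := by
      intro v
      by_cases h1 : v = a
      · subst h1; simp [hac]
      · simp [h1]
    simp_rw [this]
    rw [Finset.sum_add_distrib]
    simp [Finset.sum_ite_eq']
  rw [key]
  have h2 : (1 : ZMod 2) + 1 = 0 := by decide
  have hiff : (∃ a' ∈ C, ∃ c' ∉ C, s(a, c) = s(a', c')) ↔
      (a ∈ C ∧ c ∉ C) ∨ (c ∈ C ∧ a ∉ C) := by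
    constructor
    · rintro ⟨a', ha, c', hc, h⟩
      rcases Sym2.eq_iff.1 h with ⟨rfl, rfl⟩ | ⟨rfl, rfl⟩
      · exact Or.inl ⟨ha, hc⟩
      · exact Or.inr ⟨ha, hc⟩
    · rintro (⟨h1, h2⟩ | ⟨h1, h2⟩)
      · exact ⟨a, h1, c, h2, rfl⟩
      · exact ⟨c, h1, a, h2, Sym2.eq_swap⟩
  simp only [hiff]
  by_cases h3 : a ∈ C <;> by_cases h4 : c ∈ C <;> simp [h3, h4, h2]

lemma sum_pt [Fintype V] (C : Set V) (x : V) :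
    ∑ v with v ∈ C, pt x v = if x ∈ C then 1 else 0 := by
  simp [pt, Pi.single_apply, Finset.sum_ite_eq']

/-- The cost of `J` when the edges of `A` have weight 1 and all others weight 0. -/
noncomputable def cost (A J : Finset (Sym2 V)) : ℕ := (J ∩ A).card

lemma cost_eq_sum (A J : Finset (Sym2 V)) : cost A J = ∑ e ∈ A, if e ∈ J then 1 else 0 := by
  rw [← Finset.card_filter, cost, Finset.filter_mem_eq_inter, Finset.inter_comm]

lemma cost_symmDiff_zmod (A J W : Finset (Sym2 V)) :
    (cost A (J ∆ W) : ZMod 2) = cost A J + cost A W := by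
  have h : ∀ J : Finset (Sym2 V), (cost A J : ZMod 2) = ∑ e ∈ J, if e ∈ A then 1 else 0 := by
    intro J
    rw [cost, ← Finset.filter_mem_eq_inter, Finset.card_filter]; push_cast; rfl
  rw [h, h, h, sum_symmDiff_zmod]

/-- Switching along a part of `F ∆ J` only moves cost between `F` and `J`. -/
lemma cost_exchange (A : Finset (Sym2 V)) {F J Z : Finset (Sym2 V)} (hZ : Z ⊆ F ∆ J) :
    cost A (J ∆ Z) + cost A (F ∆ Z) = cost A J + cost A F := by
  simp only [cost_eq_sum, ← Finset.sum_add_distrib]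
  refine Finset.sum_congr rfl fun e _ => ?_
  have := @hZ e
  simp only [Finset.mem_symmDiff] at this ⊢
  by_cases h1 : e ∈ F <;> by_cases h2 : e ∈ J <;> by_cases h3 : e ∈ Z <;> simp_all

lemma cost_symmDiff_of_disjoint {A W : Finset (Sym2 V)} (J : Finset (Sym2 V))
    (h : ∀ e ∈ W, e ∉ A) : cost A (J ∆ W) = cost A J := by
  simp only [cost_eq_sum]
  refine Finset.sum_congr rfl fun e he => ?_
  have : e ∉ W := fun hw => h e hw he
  simp [Finset.mem_symmDiff, this]

lemma cost_edge_le (A J : Finset (Sym2 V)) (e : Sym2 V) :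
    cost A (J ∆ {e}) ≤ cost A J + 1 := by
  refine (Finset.card_le_card (t := insert e (J ∩ A)) ?_).trans (Finset.card_insert_le _ _)
  intro x; simp [Finset.mem_symmDiff]; tauto

lemma cost_edge_add {A J : Finset (Sym2 V)} {e : Sym2 V} (hA : e ∈ A) (hJ : e ∉ J) :
    cost A (J ∆ {e}) = cost A J + 1 := by
  have : J ∆ {e} ∩ A = insert e (J ∩ A) := by
    ext x; simp [Finset.mem_symmDiff]; grind
  rw [cost, this, Finset.card_insert_of_notMem (by simp [hJ])]; rfl

lemma cost_edge_sub {A J : Finset (Sym2 V)} {e : Sym2 V} (hA : e ∈ A) (hJ : e ∈ J) :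
    cost A (J ∆ {e}) + 1 = cost A J := by
  have : insert e (J ∆ {e} ∩ A) = J ∩ A := by
    ext x; simp [Finset.mem_symmDiff]; grind
  rw [cost, cost, ← this, Finset.card_insert_of_notMem (by simp [Finset.mem_symmDiff, hJ])]

/-! ### Making the cut of a cheapest class free -/

/-- `J` is an `x`-join relative to `b`: an edge set of boundary `b + pt x`. With
`b = bd F + pt r` these are the sets `F ∆ Z` for `Z` an `{r, x}`-join. -/
def IsJ (E : Finset (Sym2 V)) (b : V → ZMod 2) (x : V) (J : Finset (Sym2 V)) : Prop :=
  J ⊆ E ∧ bd J = b + pt x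

/-- The zero-weight class of `t`: all vertices that can be joined to `t` at no cost. -/
def cls (E E₁ : Finset (Sym2 V)) (t : V) : Set V :=
  {y | ∃ Z ⊆ E \ E₁, bd Z = pt t + pt y}

lemma mem_cls_self (E E₁ : Finset (Sym2 V)) (t : V) : t ∈ cls E E₁ t :=
  ⟨∅, by simp, by simp [vadd_self]⟩

lemma symmDiff_subset' {E J W : Finset (Sym2 V)} (hJ : J ⊆ E) (hW : W ⊆ E) : J ∆ W ⊆ E := by
  intro e; simp only [Finset.mem_symmDiff]; rintro (h | h)
  exacts [hJ h.1, hW h.1]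

/-- `F` is a `t`-join whose cost is smallest among all `x`-joins, over all vertices `x`,
for the 0/1 weights with support `E₁`; closed edge sets have even cost. -/
structure Star (E E₁ : Finset (Sym2 V)) (b : V → ZMod 2) (t : V) (F : Finset (Sym2 V)) : Prop where
  loopless : ∀ e ∈ E, ¬ e.IsDiag
  sub : E₁ ⊆ E
  bip : ∀ Z ⊆ E, bd Z = 0 → (cost E₁ Z : ZMod 2) = 0
  join : IsJ E b t F
  min : ∀ x J, IsJ E b x J → cost E₁ F ≤ cost E₁ J

namespace Star
variable {E E₁ : Finset (Sym2 V)} {b : V → ZMod 2} {t : V} {F : Finset (Sym2 V)}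

lemma cls_trans {p q : V} (hp : p ∈ cls E E₁ t) (hq : q ∈ cls E E₁ t) :
    ∃ Z ⊆ E \ E₁, bd Z = pt p + pt q := by
  obtain ⟨Z, hZ, h⟩ := hp
  obtain ⟨W, hW, h'⟩ := hq
  refine ⟨Z ∆ W, symmDiff_subset' hZ hW, ?_⟩
  rw [bd_symmDiff, h, h', show pt t + pt p + (pt t + pt q) = (pt t + pt t) + (pt p + pt q) by abel,
    vadd_self, zero_add]

lemma cls_step (H : Star E E₁ b t F) {p q : V} (hp : p ∈ cls E E₁ t) (he : s(p, q) ∈ E)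
    (he' : s(p, q) ∉ E₁) : q ∈ cls E E₁ t := by
  obtain ⟨Z, hZ, h⟩ := hp
  have hpq : p ≠ q := by simpa using H.loopless _ he
  refine ⟨Z ∆ {s(p, q)}, symmDiff_subset' hZ (by simp [he, he']), ?_⟩
  rw [bd_symmDiff, h, bd_edge hpq, show pt t + pt p + (pt p + pt q) = (pt p + pt p) + (pt t + pt q)
    by abel, vadd_self, zero_add]

lemma cut_sub (H : Star E E₁ b t F) : cut (cls E E₁ t) E ⊆ E₁ := by
  intro e he
  obtain ⟨he, a, ha, c, hc, rfl⟩ := mem_cut.1 he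
  by_contra h
  exact hc (H.cls_step ha he h)

/-- An edge set with the boundary of an `x`-join plus `pt q + pt u`, where `u` is a neighbour of
the class of `t` and `q` is in the class, is repaired by switching an edge `pu` and then connecting
`p` to `q` at no cost. -/
lemma move (H : Star E E₁ b t F) {p q u : V} (hp : p ∈ cls E E₁ t) (hq : q ∈ cls E E₁ t)
    (he : s(p, u) ∈ E) {x : V} {J : Finset (Sym2 V)} (hJ : J ⊆ E)
    (hb : bd J = b + pt q + pt u + pt x) :
    ∃ J', IsJ E b x J' ∧ ∀ A ⊆ E₁, cost A J' = cost A (J ∆ {s(p, u)}) := by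
  obtain ⟨Z, hZ, h⟩ := cls_trans hp hq
  have hpq : p ≠ u := by simpa using H.loopless _ he
  refine ⟨J ∆ {s(p, u)} ∆ Z, ⟨symmDiff_subset' (symmDiff_subset' hJ (by simpa using he))
    (hZ.trans Finset.sdiff_subset), ?_⟩, fun A hA =>
      cost_symmDiff_of_disjoint _ fun e he hA' => (Finset.mem_sdiff.1 (hZ he)).2 (hA hA')⟩
  rw [bd_symmDiff, bd_symmDiff, h, hb, bd_edge hpq, show b + pt q + pt u + pt x + (pt p + pt u) +
    (pt p + pt q) = (b + pt x) + (pt q + pt q) + (pt u + pt u) + (pt p + pt p) by abel]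
  simp [vadd_self]

/-- An edge of `F` leaving the class could be dropped, giving a cheaper join for its outer end. -/
lemma cut_F (H : Star E E₁ b t F) : cut (cls E E₁ t) F = ∅ := by
  rw [Finset.eq_empty_iff_forall_notMem]
  intro e he
  obtain ⟨he, a, ha, c, hc, rfl⟩ := mem_cut.1 he
  have heE := H.join.1 he
  have heE₁ : s(a, c) ∈ E₁ := H.cut_sub (mem_cut.2 ⟨heE, a, ha, c, hc, rfl⟩)
  obtain ⟨J', hJ', hc'⟩ := H.move ha (mem_cls_self E E₁ t) heE (x := c) H.join.1 (by
    rw [H.join.2, add_assoc (b + pt t), vadd_self, add_zero])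
  have h1 := H.min _ _ hJ'
  rw [hc' _ subset_rfl] at h1
  have := cost_edge_sub heE₁ he
  omega

lemma parity (H : Star E E₁ b t F) {x : V} {J J' : Finset (Sym2 V)} (hJ : IsJ E b x J)
    (hJ' : IsJ E b x J') : (cost E₁ J : ZMod 2) = cost E₁ J' := by
  have := H.bip (J ∆ J') (symmDiff_subset' hJ.1 hJ'.1) (by
    rw [bd_symmDiff, hJ.2, hJ'.2, vadd_self])
  rw [cost_symmDiff_zmod] at this
  exact CharTwo.add_eq_zero.1 this

/-- By parity, neighbours of the class outside it have joins of cost at least `cost E₁ F + 1`. -/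
lemma succ_le (H : Star E E₁ b t F) {q u : V} (hq : q ∈ cls E E₁ t) (hu : u ∉ cls E E₁ t)
    (he : s(q, u) ∈ E) {J : Finset (Sym2 V)} (hJ : IsJ E b u J) :
    cost E₁ F + 1 ≤ cost E₁ J := by
  have hcut : s(q, u) ∈ cut (cls E E₁ t) E := mem_cut.2 ⟨he, q, hq, u, hu, rfl⟩
  have hF : s(q, u) ∉ F := fun h => by
    have : s(q, u) ∈ cut (cls E E₁ t) F := mem_cut.2 ⟨h, q, hq, u, hu, rfl⟩
    simp [H.cut_F] at this
  obtain ⟨J', hJ', hc'⟩ := H.move hq (mem_cls_self E E₁ t) he (x := u) H.join.1 (by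
    rw [H.join.2, add_assoc (b + pt t), vadd_self, add_zero])
  have h1 := hc' _ subset_rfl
  rw [cost_edge_add (H.cut_sub hcut) hF] at h1
  have h2 := H.parity hJ hJ'
  have h3 := H.min _ _ hJ
  rcases Nat.lt_or_ge (cost E₁ F) (cost E₁ J) with h | h
  · exact h
  · have : cost E₁ J = cost E₁ F := le_antisymm h h3
    rw [h1, this] at h2
    simp at h2

lemma cost_split (H : Star E E₁ b t F) (J : Finset (Sym2 V)) :
    cost E₁ J = cost (E₁ \ cut (cls E E₁ t) E) J + cost (cut (cls E E₁ t) E) J := by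
  simp only [cost_eq_sum]
  exact (Finset.sum_sdiff H.cut_sub).symm

lemma cost_cut {J : Finset (Sym2 V)} (hJ : J ⊆ E) (C : Set V) :
    cost (cut C E) J = (cut C J).card := by
  rw [cost]
  congr 1
  ext e
  have : e ∈ J → e ∈ E := @hJ e
  simp only [Finset.mem_inter, mem_cut]
  tauto

/-- Making the cut `S` of the class of `t` free lowers the minimum cost of an `x`-join by at
most one, and not at all for `x` in the class. By induction on the number of edges of `S` used by
`J`: drop one of them, `pu`, and follow `F ∆ J` from `u` outside the class, either to `x` or, by
parity, to another edge of `S`; switching along this path gives a join with fewer edges of `S`, and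
minimality of `F` bounds its cost. -/
lemma exists_expand [Fintype V] (H : Star E E₁ b t F) (n : ℕ) :
    ∀ x J, IsJ E b x J → cost (cut (cls E E₁ t) E) J = n →
      ∃ J', IsJ E b x J' ∧ cost E₁ J' ≤
        cost (E₁ \ cut (cls E E₁ t) E) J + if x ∈ cls E E₁ t then 0 else 1 := by
  induction n using Nat.strong_induction_on with
  | _ n ih =>
  intro x J hJ hn
  have hsplit := H.cost_split
  have hcutF := H.cut_F
  have hSE₁ := H.cut_sub
  have htQ := mem_cls_self E E₁ t
  have hcutF' := cost_cut H.join.1 (cls E E₁ t)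
  set Q := cls E E₁ t with hQ
  set S := cut Q E with hS
  set E₂ := E₁ \ S with hE₂
  have hE₂₁ : E₂ ⊆ E₁ := Finset.sdiff_subset
  rcases Nat.eq_zero_or_pos n with h0 | hpos
  · refine ⟨J, hJ, ?_⟩
    rw [hsplit, hn, h0]; exact Nat.le_add_right _ _
  obtain ⟨e, he⟩ := Finset.card_pos.1 (hn ▸ hpos)
  obtain ⟨heJ, heS⟩ := Finset.mem_inter.1 he
  obtain ⟨heE, p, hp, u, hu, rfl⟩ := mem_cut.1 heS
  have hFS : ∀ e ∈ S, e ∉ F := fun e he h => by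
    have : e ∈ cut Q F := mem_cut.2 ⟨h, (mem_cut.1 he).2⟩
    rw [hcutF] at this; simp at this
  have hSF : cost S F = 0 := by rw [hcutF', hcutF]; simp
  have hSE₂ : ∀ e ∈ S, e ∉ E₂ := fun e he h => (Finset.mem_sdiff.1 h).2 he
  -- edges of `F ∆ J` that avoid the class
  set Z' := (F ∆ J).filter (fun e => ∀ v ∈ e, v ∉ Q) with hZ'
  -- the vertices joined to `u` by edges of `F ∆ J` outside the class
  set C : Set V := {y | ∃ Z ⊆ Z', bd Z = pt u + pt y} with hC
  have huC : u ∈ C := ⟨∅, by simp, by simp [vadd_self]⟩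
  have hZE : F ∆ J ⊆ E := symmDiff_subset' H.join.1 hJ.1
  have hZ'Z : Z' ⊆ F ∆ J := Finset.filter_subset _ _
  have hZ'S : ∀ e ∈ Z', e ∉ S := by
    intro e he h
    obtain ⟨-, a, ha, c, hc, rfl⟩ := mem_cut.1 h
    exact (Finset.mem_filter.1 he).2 a (by simp) ha
  have hCQ : ∀ y ∈ C, y ∉ Q := by
    rintro y ⟨Z, hZ, hb⟩ hy
    have hyu : y ≠ u := fun h => hu (h ▸ hy)
    have h1 : bd Z y = 0 := by
      refine Finset.sum_eq_zero fun e he => if_neg fun h => ?_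
      exact (Finset.mem_filter.1 (hZ he)).2 y h hy
    rw [hb] at h1
    simp [pt, hyu] at h1
  have hSZ : ∀ Z ⊆ Z', ∀ K, cost S (K ∆ Z) = cost S K := fun Z hZ K =>
    cost_symmDiff_of_disjoint _ fun e he => hZ'S e (hZ he)
  have hex : ∀ Z ⊆ Z', cost E₂ (J ∆ Z) + cost E₁ (F ∆ Z) = cost E₂ J + cost E₁ F := by
    intro Z hZ
    have h1 := cost_exchange E₂ (hZ.trans hZ'Z)
    have h2 := hsplit F
    have h3 := hsplit (F ∆ Z)
    rw [hSZ Z hZ] at h3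
    omega
  -- if `F ∆ J` leads from `u` to `x`, the new join is `F ∆ Z` with `pu` added
  by_cases hxC : x ∈ C
  · obtain ⟨Z, hZ, hbZ⟩ := hxC
    have hxQ : x ∉ Q := hCQ x ⟨Z, hZ, hbZ⟩
    have hZE' : Z ⊆ E := hZ.trans (hZ'Z.trans hZE)
    obtain ⟨F', hF', hcF⟩ := H.move hp htQ heE (x := x) (symmDiff_subset' H.join.1 hZE') (by
      rw [bd_symmDiff, H.join.2, hbZ]; abel)
    obtain ⟨J₂, hJ₂, hcJ⟩ := H.move hp htQ heE (x := t) (symmDiff_subset' hJ.1 hZE') (by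
      rw [bd_symmDiff, hJ.2, hbZ, show b + pt x + (pt u + pt x) = b + pt u + (pt x + pt x) by abel,
        show b + pt t + pt u + pt t = b + pt u + (pt t + pt t) by abel, vadd_self, vadd_self])
    have hn₂ : cost S J₂ + 1 = n := by
      rw [hcJ _ hSE₁, cost_edge_sub heS, hSZ Z hZ, hn]
      simp only [Finset.mem_symmDiff]
      exact Or.inl ⟨heJ, fun h => hZ'S _ (hZ h) heS⟩
    obtain ⟨J₃, hJ₃, h₃⟩ := ih (cost S J₂) (by omega) t J₂ hJ₂ rfl
    rw [if_pos htQ, hcJ _ hE₂₁, cost_symmDiff_of_disjoint (A := E₂) _ (by simpa using hSE₂ _ heS)]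
      at h₃
    have h4 := H.min _ _ hJ₃
    have h5 := hex Z hZ
    refine ⟨F', hF', ?_⟩
    rw [if_neg hxQ, hcF _ subset_rfl]
    have := cost_edge_le E₁ (F ∆ Z) s(p, u)
    omega
  -- otherwise `F ∆ J` leaves `C` through a second edge `u₂q` of the cut, and both
  -- `pu` and `u₂q` are dropped
  · have hpar : ((cut C (F ∆ J)).card : ZMod 2) = 0 := by
      rw [cut_parity C fun e he => H.loopless e (hZE he), bd_symmDiff, H.join.2, hJ.2,
        show b + pt t + (b + pt x) = (b + b) + (pt t + pt x) by abel, vadd_self, zero_add]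
      simp only [Pi.add_apply, Finset.sum_add_distrib, sum_pt, hxC,
        if_neg fun h => hCQ t h htQ]
      simp
    have heC : s(p, u) ∈ cut C (F ∆ J) := mem_cut.2
      ⟨Finset.mem_symmDiff.2 (Or.inr ⟨heJ, hFS _ heS⟩), u, huC, p, fun h => hCQ p h hp,
        Sym2.eq_swap⟩
    have hcard : 1 < (cut C (F ∆ J)).card := by
      have h1 := Finset.card_pos.2 ⟨_, heC⟩
      rw [ZMod.natCast_eq_zero_iff_even] at hpar
      obtain ⟨k, hk⟩ := hpar
      omega
    obtain ⟨e₂, he₂, hne⟩ := Finset.exists_mem_ne hcard s(p, u)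
    obtain ⟨he₂Z, u₂, hu₂, q, hq, rfl⟩ := mem_cut.1 he₂
    obtain ⟨Z, hZ, hbZ⟩ := id hu₂
    have hZE' : Z ⊆ E := hZ.trans (hZ'Z.trans hZE)
    have hu₂Q := hCQ _ hu₂
    have hqu : u₂ ≠ q := fun h => hq (h ▸ hu₂)
    have hqQ : q ∈ Q := by
      by_contra hqQ
      refine hq ⟨Z ∆ {s(u₂, q)}, symmDiff_subset' hZ ?_, ?_⟩
      · rw [Finset.singleton_subset_iff]
        refine Finset.mem_filter.2 ⟨he₂Z, fun v hv => ?_⟩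
        rcases Sym2.mem_iff.1 hv with rfl | rfl <;> assumption
      · rw [bd_symmDiff, hbZ, bd_edge hqu, show pt u + pt u₂ + (pt u₂ + pt q) =
          (pt u₂ + pt u₂) + (pt u + pt q) by abel, vadd_self, zero_add]
    rw [Sym2.eq_swap] at hne he₂Z
    have he₂E := hZE he₂Z
    have he₂S : s(q, u₂) ∈ S := mem_cut.2 ⟨he₂E, q, hqQ, u₂, hu₂Q, rfl⟩
    have he₂J : s(q, u₂) ∈ J := by
      rcases Finset.mem_symmDiff.1 he₂Z with h | h
      exacts [absurd h.1 (hFS _ he₂S), h.1]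
    obtain ⟨F', hF', hcF⟩ := H.move hp htQ heE (x := u₂) (symmDiff_subset' H.join.1 hZE') (by
      rw [bd_symmDiff, H.join.2, hbZ]; abel)
    obtain ⟨J₂, hJ₂, hcJ⟩ := H.move hp hqQ heE (x := x)
      (symmDiff_subset' (symmDiff_subset' hJ.1 hZE') (Finset.singleton_subset_iff.2 he₂E)) (by
      rw [bd_symmDiff, bd_symmDiff, hJ.2, hbZ, bd_edge hqu.symm, show b + pt x + (pt u + pt u₂) +
        (pt q + pt u₂) = b + pt q + pt u + pt x + (pt u₂ + pt u₂) by abel, vadd_self, add_zero])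
    have hn₁ : cost S (J ∆ Z ∆ {s(q, u₂)}) + 1 = n := by
      rw [cost_edge_sub he₂S, hSZ Z hZ, hn]
      exact Finset.mem_symmDiff.2 (Or.inl ⟨he₂J, fun h => hZ'S _ (hZ h) he₂S⟩)
    have hn₂ : cost S J₂ + 1 = cost S (J ∆ Z ∆ {s(q, u₂)}) := by
      rw [hcJ _ hSE₁, cost_edge_sub heS]
      refine Finset.mem_symmDiff.2 (Or.inl ⟨Finset.mem_symmDiff.2 (Or.inl ⟨heJ, fun h =>
        hZ'S _ (hZ h) heS⟩), ?_⟩)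
      simpa using hne.symm
    obtain ⟨J₃, hJ₃, h₃⟩ := ih (cost S J₂) (by omega) x J₂ hJ₂ rfl
    rw [hcJ _ hE₂₁, cost_symmDiff_of_disjoint (A := E₂) _ (by simpa using hSE₂ _ heS),
      cost_symmDiff_of_disjoint (A := E₂) _ (by simpa using hSE₂ _ he₂S)] at h₃
    refine ⟨J₃, hJ₃, h₃.trans (Nat.add_le_add_right ?_ _)⟩
    have h4 := H.succ_le hqQ hu₂Q he₂E hF'
    rw [hcF _ subset_rfl] at h4
    have h5 := cost_edge_le E₁ (F ∆ Z) s(p, u)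
    have h6 := hex Z hZ
    omega

lemma cost_cut_parity [Fintype V] (H : Star E E₁ b t F) {K : Finset (Sym2 V)} (hK : K ⊆ E) :
    (cost (cut (cls E E₁ t) E) K : ZMod 2) = ∑ v with v ∈ cls E E₁ t, bd K v := by
  rw [cost_cut hK, cut_parity _ fun e he => H.loopless e (hK he)]

lemma cost_cut_join [Fintype V] (H : Star E E₁ b t F) {x : V} {J : Finset (Sym2 V)}
    (hJ : IsJ E b x J) :
    (cost (cut (cls E E₁ t) E) J : ZMod 2) = if x ∈ cls E E₁ t then 0 else 1 := by
  have h1 := H.cost_cut_parity H.join.1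
  rw [cost_cut H.join.1, H.cut_F, H.join.2] at h1
  rw [H.cost_cut_parity hJ.1, hJ.2]
  simp only [Pi.add_apply, Finset.sum_add_distrib, sum_pt, mem_cls_self, if_true,
    Finset.card_empty, Nat.cast_zero] at h1 ⊢
  rw [← CharTwo.add_eq_zero.1 h1.symm |>.symm]
  have : (1 : ZMod 2) + 1 = 0 := by decide
  split_ifs <;> simp [this]

/-- A minimum `x`-join uses the cut of the class as rarely as parity allows. -/
lemma cost_cut_min [Fintype V] (H : Star E E₁ b t F) {x : V} {J : Finset (Sym2 V)}
    (hJ : IsJ E b x J) (hmin : ∀ J', IsJ E b x J' → cost E₁ J ≤ cost E₁ J') :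
    cost (cut (cls E E₁ t) E) J = if x ∈ cls E E₁ t then 0 else 1 := by
  obtain ⟨J', hJ', h⟩ := H.exists_expand _ x J hJ rfl
  have h1 := hmin J' hJ'
  have h2 := H.cost_split J
  have h3 := H.cost_cut_join hJ
  split_ifs at * with hx
  · omega
  · have h4 : cost (cut (cls E E₁ t) E) J ≠ 0 := fun h => by simp [h] at h3
    omega

/-- Minimum joins stay minimum when the cut of the class is made free. -/
lemma min_contract [Fintype V] (H : Star E E₁ b t F) {x : V} {J : Finset (Sym2 V)}
    (hJ : IsJ E b x J) (hmin : ∀ J', IsJ E b x J' → cost E₁ J ≤ cost E₁ J') :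
    ∀ J', IsJ E b x J' →
      cost (E₁ \ cut (cls E E₁ t) E) J ≤ cost (E₁ \ cut (cls E E₁ t) E) J' := by
  intro J' hJ'
  obtain ⟨J₂, hJ₂, h⟩ := H.exists_expand _ x J' hJ' rfl
  have h1 := hmin _ hJ₂
  have h2 := H.cost_split J
  have h3 := H.cost_cut_min hJ hmin
  omega

/-- Switching a minimum join along an `{s, y}`-join with `s`, `y` outside the class keeps the
parity of its intersection with the cut, which was already as small as possible. -/
lemma cost_cut_symmDiff [Fintype V] (H : Star E E₁ b t F) {x : V} {J : Finset (Sym2 V)}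
    (hJ : IsJ E b x J) (hmin : ∀ J', IsJ E b x J' → cost E₁ J ≤ cost E₁ J')
    {s y : V} {Z : Finset (Sym2 V)} (hs : s ∉ cls E E₁ t) (hy : y ∉ cls E E₁ t) (hZ : Z ⊆ E)
    (hb : bd Z = pt s + pt y) :
    cost (cut (cls E E₁ t) E) J ≤ cost (cut (cls E E₁ t) E) (J ∆ Z) := by
  have h1 := H.cost_cut_min hJ hmin
  have h2 := cost_symmDiff_zmod (cut (cls E E₁ t) E) J Z
  rw [H.cost_cut_parity hZ, hb] at h2
  simp only [Pi.add_apply, Finset.sum_add_distrib, sum_pt, hs, hy, if_false, add_zero] at h2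
  rw [h1]
  split_ifs at h1 with hx
  · simp [hx]
  · rw [if_neg hx]
    by_contra h
    have : cost (cut (cls E E₁ t) E) (J ∆ Z) = 0 := by omega
    rw [this, h1] at h2
    simp at h2

end Star

/-! ### Level sets and their components -/

/-- The vertices having an `x`-join of cost at most `l`. -/
def lev (E E₁ : Finset (Sym2 V)) (b : V → ZMod 2) (l : ℕ) : Set V :=
  {x | ∃ J, IsJ E b x J ∧ cost E₁ J ≤ l}

/-- `L` is a connected component of the graph with edge set `E` induced on `U`; connectedness is
expressed by the absence of a proper nonempty part without outgoing edges. -/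
structure Comp (E : Finset (Sym2 V)) (U L : Set V) : Prop where
  nonempty : L.Nonempty
  sub : L ⊆ U
  closed : ∀ x ∈ L, ∀ y ∈ U, s(x, y) ∈ E → y ∈ L
  conn : ∀ C ⊆ L, C.Nonempty → (∀ x ∈ C, ∀ y ∈ L, s(x, y) ∈ E → y ∈ C) → L ⊆ C

namespace Star
variable {E E₁ : Finset (Sym2 V)} {b : V → ZMod 2} {t : V} {F : Finset (Sym2 V)}

/-- Making the cut of the class free shifts the levels down by one. -/
lemma lev_contract [Fintype V] (H : Star E E₁ b t F) {l : ℕ} (hl : cost E₁ F ≤ l) :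
    lev E (E₁ \ cut (cls E E₁ t) E) b l = lev E E₁ b (l + 1) := by
  ext x
  constructor
  · rintro ⟨J, hJ, h⟩
    obtain ⟨J', hJ', h'⟩ := H.exists_expand _ x J hJ rfl
    refine ⟨J', hJ', ?_⟩
    split_ifs at h' <;> omega
  · rintro ⟨J, hJ, h⟩
    by_cases hx : x ∈ cls E E₁ t
    · obtain ⟨Z, hZ, hb⟩ := id hx
      refine ⟨F ∆ Z, ⟨symmDiff_subset' H.join.1 (hZ.trans Finset.sdiff_subset), ?_⟩, ?_⟩
      · rw [bd_symmDiff, H.join.2, hb, show b + pt t + (pt t + pt x) =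
          b + pt x + (pt t + pt t) by abel, vadd_self, add_zero]
      · have h1 := H.cost_split (F ∆ Z)
        rw [cost_symmDiff_of_disjoint (A := E₁) _ fun e he => (Finset.mem_sdiff.1 (hZ he)).2] at h1
        omega
    · refine ⟨J, hJ, ?_⟩
      have h1 := H.cost_split J
      have h2 := H.cost_cut_join hJ
      rw [if_neg hx] at h2
      have h3 : cost (cut (cls E E₁ t) E) J ≠ 0 := fun h => by simp [h] at h2
      omega

/-- At the lowest level the component of `t` is exactly its zero-weight class. -/
lemma cls_eq [Fintype V] (H : Star E E₁ b t F) {L : Set V}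
    (hL : Comp E (lev E E₁ b (cost E₁ F)) L) (ht : t ∈ L) : cls E E₁ t = L := by
  have h1 : cls E E₁ t ⊆ L := by
    rintro y ⟨Z, hZ, hb⟩
    by_contra hy
    have hZE := hZ.trans Finset.sdiff_subset
    have h1 := cut_parity L fun e he => H.loopless e (hZE he)
    rw [hb] at h1
    simp only [Pi.add_apply, Finset.sum_add_distrib, sum_pt, ht, hy, if_true, if_false,
      add_zero] at h1
    obtain ⟨e, he⟩ : (cut L Z).Nonempty := by
      rw [Finset.nonempty_iff_ne_empty]
      intro h
      simp [h] at h1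
    obtain ⟨heZ, a, ha, c, hc, rfl⟩ := mem_cut.1 he
    obtain ⟨J, hJ, hcJ⟩ := hL.sub ha
    have hac : a ≠ c := fun h => hc (h ▸ ha)
    refine hc (hL.closed a ha c ⟨J ∆ {s(a, c)}, ⟨symmDiff_subset' hJ.1
      (Finset.singleton_subset_iff.2 (hZE heZ)), ?_⟩, ?_⟩ (hZE heZ))
    · rw [bd_symmDiff, hJ.2, bd_edge hac, show b + pt a + (pt a + pt c) =
        b + pt c + (pt a + pt a) by abel, vadd_self, add_zero]
    · rwa [cost_symmDiff_of_disjoint (A := E₁) _ (by simpa using (Finset.mem_sdiff.1 (hZ heZ)).2)]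
  refine h1.antisymm (hL.conn _ h1 ⟨t, mem_cls_self _ _ _⟩ fun x hx y hy he => ?_)
  by_contra hyQ
  obtain ⟨J, hJ, hcJ⟩ := hL.sub hy
  have := H.succ_le hx hyQ he hJ
  omega

end Star

/-- The two conclusions of Sebő's theorem for a component `L` of the level set `U`: a minimum
join crosses the cut of `L` at most once, and it is not improved by switching along a join of two
outer neighbours of `L`. -/
def Sebo (E E₁ : Finset (Sym2 V)) (b : V → ZMod 2) (U L : Set V) : Prop :=
  ∀ x J, IsJ E b x J → (∀ J', IsJ E b x J' → cost E₁ J ≤ cost E₁ J') →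
    (cut L J).card ≤ 1 ∧
      ∀ s y, s ∉ U → y ∉ U → (∃ a ∈ L, s(a, s) ∈ E) → (∃ a ∈ L, s(a, y) ∈ E) →
        ∀ Z ⊆ E, bd Z = pt s + pt y → cost E₁ J ≤ cost E₁ (J ∆ Z)

lemma Star.sebo_base [Fintype V] {E E₁ : Finset (Sym2 V)} {b : V → ZMod 2} {t : V}
    {F : Finset (Sym2 V)} (H : Star E E₁ b t F) {L : Set V}
    (hL : Comp E (lev E E₁ b (cost E₁ F)) L) (ht : t ∈ L) :
    Sebo E E₁ b (lev E E₁ b (cost E₁ F)) L := by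
  intro x J hJ hmin
  have hQL := H.cls_eq hL ht
  constructor
  · rw [← cost_cut hJ.1, ← hQL, H.cost_cut_min hJ hmin]
    split_ifs <;> omega
  rintro s y hs hy ⟨a, ha, hae⟩ ⟨c, hc, hce⟩ Z hZ hb
  have hsQ : s ∉ cls E E₁ t := fun h => hs (hL.sub (hQL ▸ h))
  have hyQ : y ∉ cls E E₁ t := fun h => hy (hL.sub (hQL ▸ h))
  rw [← hQL] at ha hc
  have hcy : c ≠ y := fun h => hyQ (h ▸ hc)
  have h1 := H.cost_cut_symmDiff hJ hmin hsQ hyQ hZ hb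
  obtain ⟨J', hJ', hc'⟩ := H.move ha hc hae (x := x)
    (symmDiff_subset' (symmDiff_subset' hJ.1 hZ) (Finset.singleton_subset_iff.2 hce)) (by
      rw [bd_symmDiff, bd_symmDiff, hJ.2, hb, bd_edge hcy, show b + pt x + (pt s + pt y) +
        (pt c + pt y) = b + pt c + pt s + pt x + (pt y + pt y) by abel, vadd_self, add_zero])
  have h2 := H.min_contract hJ hmin J' hJ'
  have haS : s(a, s) ∈ cut (cls E E₁ t) E := mem_cut.2 ⟨hae, a, ha, s, hsQ, rfl⟩
  have hcS : s(c, y) ∈ cut (cls E E₁ t) E := mem_cut.2 ⟨hce, c, hc, y, hyQ, rfl⟩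
  rw [hc' _ Finset.sdiff_subset,
    cost_symmDiff_of_disjoint (A := E₁ \ cut (cls E E₁ t) E) _ (by simp [haS]),
    cost_symmDiff_of_disjoint (A := E₁ \ cut (cls E E₁ t) E) _ (by simp [hcS])] at h2
  rw [H.cost_split J, H.cost_split (J ∆ Z)]
  omega

/-- Sebő's theorem without a root, by induction on the level: while some join is cheaper than the
level, the cut of the class of a cheapest one is made free and the level drops by one; at the lowest
level `Star.sebo_base` applies. -/
theorem sebo [Fintype V] {E : Finset (Sym2 V)} {b : V → ZMod 2} (hloop : ∀ e ∈ E, ¬ e.IsDiag)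
    (l : ℕ) : ∀ E₁ ⊆ E, (∀ Z ⊆ E, bd Z = 0 → (cost E₁ Z : ZMod 2) = 0) →
    ∀ L, Comp E (lev E E₁ b l) L → Sebo E E₁ b (lev E E₁ b l) L := by
  induction l with
  | zero =>
    intro E₁ hE₁ hbip L hL
    obtain ⟨t, ht⟩ := hL.nonempty
    obtain ⟨F, hF, hcF⟩ := hL.sub ht
    have h0 : cost E₁ F = 0 := by omega
    rw [← h0] at hL ⊢
    exact Star.sebo_base ⟨hloop, hE₁, hbip, hF, fun _ _ _ => by omega⟩ hL ht
  | succ l ih =>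
    intro E₁ hE₁ hbip L hL
    by_cases hex : ∃ n t F, IsJ E b t F ∧ cost E₁ F = n ∧ n ≤ l
    · obtain ⟨t, F, hF, hc, hn⟩ := Nat.find_spec hex
      have H : Star E E₁ b t F := ⟨hloop, hE₁, hbip, hF, fun x J hJ => by
        by_contra! h
        exact Nat.find_min hex (hc ▸ h) ⟨x, J, hJ, rfl, by omega⟩⟩
      rw [← H.lev_contract (hc ▸ hn)] at hL ⊢
      intro x J hJ hmin
      have htl : cls E E₁ t ⊆ lev E (E₁ \ cut (cls E E₁ t) E) b l := by
        rintro y ⟨Z, hZ, hb⟩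
        rw [H.lev_contract (hc ▸ hn)]
        refine ⟨F ∆ Z, ⟨symmDiff_subset' hF.1 (hZ.trans Finset.sdiff_subset), ?_⟩, ?_⟩
        · rw [bd_symmDiff, hF.2, hb, show b + pt t + (pt t + pt y) =
            b + pt y + (pt t + pt t) by abel, vadd_self, add_zero]
        · rw [cost_symmDiff_of_disjoint (A := E₁) _ fun e he => (Finset.mem_sdiff.1 (hZ he)).2]
          omega
      obtain ⟨h1, h2⟩ := ih _ (Finset.sdiff_subset.trans hE₁) (fun Z hZ hb => by
        have h := hbip Z hZ hb
        have h' := H.cost_cut_parity hZ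
        rw [H.cost_split, Nat.cast_add, h', hb] at h
        simpa using h) L hL x J hJ (H.min_contract hJ hmin)
      refine ⟨h1, fun s y hs hy has hay Z hZ hb => ?_⟩
      have h3 := h2 s y hs hy has hay Z hZ hb
      have h4 := H.cost_cut_symmDiff hJ hmin (fun h => hs (htl h)) (fun h => hy (htl h)) hZ hb
      rw [H.cost_split J, H.cost_split (J ∆ Z)]
      omega
    · push Not at hex
      obtain ⟨t, ht⟩ := hL.nonempty
      obtain ⟨F, hF, hcF⟩ := hL.sub ht
      have h0 : cost E₁ F = l + 1 := le_antisymm hcF (hex _ t F hF rfl)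
      rw [← h0] at hL ⊢
      exact Star.sebo_base ⟨hloop, hE₁, hbip, hF, fun x J hJ => h0 ▸ hex _ x J hJ rfl⟩ hL ht

end Joins

/-! ### From walks to joins -/

section Walks
open Classical
open scoped symmDiff

lemma bd_eq_one_iff (Z : Finset (Sym2 V)) (v : V) :
    bd Z v = 1 ↔ Odd ({e ∈ (Z : Set (Sym2 V)) | v ∈ e}).ncard := by
  have h : {e ∈ (Z : Set (Sym2 V)) | v ∈ e} = ((Z.filter (v ∈ ·) : Finset _) : Set (Sym2 V)) := by
    ext; simp
  rw [h, Set.ncard_coe_finset, ← ZMod.natCast_eq_one_iff_odd, Finset.card_filter, Nat.cast_sum]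
  simp [bd]

lemma isJoin_iff [Fintype V] (G : SimpleGraph V) (T : Set V) (Z : Finset (Sym2 V)) :
    IsJoin G T Z ↔ Z ⊆ G.edgeFinset ∧ ∀ v, bd Z v = 1 ↔ v ∈ T := by
  simp only [IsJoin, bd_eq_one_iff]
  rw [← SimpleGraph.coe_edgeFinset, Finset.coe_subset]

/-- `F` is smallest among the edge sets of `G` with the same boundary. -/
structure MinJ [Fintype V] (G : SimpleGraph V) (F : Finset (Sym2 V)) : Prop where
  sub : F ⊆ G.edgeFinset
  min : ∀ J ⊆ G.edgeFinset, bd J = bd F → F.card ≤ J.card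

lemma IsMinJoin.minJ [Fintype V] {G : SimpleGraph V} {T : Set V} {F : Finset (Sym2 V)}
    (h : IsMinJoin G T F) : MinJ G F := by
  obtain ⟨h1, h2⟩ := h
  obtain ⟨h3, h4⟩ := (isJoin_iff G T F).1 h1
  refine ⟨h3, fun J hJ hb => ?_⟩
  have h5 : IsJoin G T J := (isJoin_iff G T J).2 ⟨hJ, by rwa [hb]⟩
  rw [← Set.ncard_coe_finset F, h2, ← Set.ncard_coe_finset J]
  exact Nat.sInf_le ⟨_, h5, rfl⟩

/-- The `F`-weight of an edge set. -/
noncomputable def wt (F Z : Finset (Sym2 V)) : ℤ := ∑ e ∈ Z, edgeWt F e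

lemma wt_eq (F Z : Finset (Sym2 V)) : wt F Z = (F ∆ Z).card - F.card := by
  have h1 : (F ∆ Z).card = (F \ Z).card + (Z \ F).card := by
    rw [← Finset.card_union_of_disjoint]
    · rfl
    · exact disjoint_sdiff_sdiff
  have h2 := Finset.card_sdiff_add_card_inter F Z
  have h3 : wt F Z = (Z \ F).card - (F ∩ Z).card := by
    rw [wt, ← Finset.sum_sdiff (Finset.inter_subset_right : F ∩ Z ⊆ Z)]
    rw [Finset.sum_congr rfl (g := fun _ => 1) (by
        intro e he
        have : e ∉ F := fun h => (Finset.mem_sdiff.1 he).2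
          (Finset.mem_inter.2 ⟨h, (Finset.mem_sdiff.1 he).1⟩)
        simp [edgeWt, this]),
      Finset.sum_congr rfl (s₁ := F ∩ Z) (g := fun _ => -1)
        (by intro e he; simp [edgeWt, (Finset.mem_inter.1 he).1])]
    have : Z \ (F ∩ Z) = Z \ F := by ext; simp
    rw [this]; simp [sub_eq_add_neg]
  rw [h3, h1]; push_cast; omega

lemma wt_sub {F Z W : Finset (Sym2 V)} (h : W ⊆ Z) : wt F Z = wt F (Z \ W) + wt F W :=
  (Finset.sum_sdiff h).symm

lemma MinJ.even_nonneg [Fintype V] {G : SimpleGraph V} {F Z : Finset (Sym2 V)} (h : MinJ G F)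
    (hZ : Z ⊆ G.edgeFinset) (hb : bd Z = 0) : 0 ≤ wt F Z := by
  have := h.min (F ∆ Z) (symmDiff_subset' h.sub hZ) (by rw [bd_symmDiff, hb, add_zero])
  rw [wt_eq]; omega

lemma bd_sdiff {Z W : Finset (Sym2 V)} (h : W ⊆ Z) : bd (Z \ W) = bd Z + bd W := by
  rw [← bd_symmDiff]; congr 1
  ext e; have := @h e; simp [Finset.mem_symmDiff]; tauto

lemma bd_walk {G : SimpleGraph V} {x y : V} (p : G.Walk x y) (hp : p.edges.Nodup) :
    bd p.edges.toFinset = pt x + pt y := by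
  induction p with
  | nil => simp [vadd_self]
  | @cons u v w h p ih =>
    rw [Walk.edges_cons, List.nodup_cons] at hp
    have : (s(u, v) :: p.edges).toFinset = {s(u, v)} ∆ p.edges.toFinset := by
      ext e; simp [Finset.mem_symmDiff]
      by_cases he : e = s(u, v)
      · subst he; simp [hp.1]
      · simp [he]
    rw [Walk.edges_cons, this, bd_symmDiff, bd_edge h.ne, ih hp.2,
      show pt u + pt v + (pt v + pt w) = (pt v + pt v) + (pt u + pt w) by abel, vadd_self, zero_add]

lemma walk_sub [Fintype V] {G : SimpleGraph V} {x y : V} (p : G.Walk x y) :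
    p.edges.toFinset ⊆ G.edgeFinset := by
  intro e he
  rw [SimpleGraph.mem_edgeFinset]
  exact p.edges_subset_edgeSet (List.mem_toFinset.1 he)

lemma walkWt_eq {G : SimpleGraph V} {F : Finset (Sym2 V)} {x y : V} (p : G.Walk x y)
    (hp : p.edges.Nodup) : walkWt F p = wt F p.edges.toFinset := by
  rw [walkWt, wt, List.sum_toFinset _ hp]

lemma loopless [Fintype V] {G : SimpleGraph V} {Z : Finset (Sym2 V)} (hZ : Z ⊆ G.edgeFinset) :
    ∀ e ∈ Z, ¬ e.IsDiag := fun _ he =>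
  G.not_isDiag_of_mem_edgeSet (SimpleGraph.mem_edgeFinset.1 (hZ he))

/-- An `{x, y}`-join contains a path from `x` to `y`: otherwise the vertices reachable from `x`
would have an odd degree sum. -/
lemma exists_path [Fintype V] {G : SimpleGraph V} {Z : Finset (Sym2 V)} (hZ : Z ⊆ G.edgeFinset)
    {x y : V} (hb : bd Z = pt x + pt y) :
    ∃ p : G.Walk x y, p.IsPath ∧ p.edges.toFinset ⊆ Z := by
  have hl := loopless hZ
  set H := SimpleGraph.fromEdgeSet (Z : Set (Sym2 V)) with hH
  have hr : H.Reachable x y := by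
    by_contra hr
    have h1 := cut_parity {v | H.Reachable x v} hl
    have hx : x ∈ {v | H.Reachable x v} := Reachable.refl x
    have hy : y ∉ {v | H.Reachable x v} := hr
    rw [hb] at h1
    simp only [Pi.add_apply, Finset.sum_add_distrib, sum_pt, hx, hy, if_true, if_false,
      add_zero] at h1
    have h2 : cut {v | H.Reachable x v} Z = ∅ := by
      rw [Finset.eq_empty_iff_forall_notMem]
      intro e he
      obtain ⟨he, a, ha, c, hc, rfl⟩ := mem_cut.1 he
      refine hc (ha.trans (Adj.reachable ?_))
      have : a ≠ c := by simpa using hl _ he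
      simp [hH, this, he]
    simp [h2] at h1
  obtain ⟨q, hq⟩ := hr.exists_isPath
  have hqe : ∀ e ∈ q.edges, e ∈ Z := fun e he => by
    have := q.edges_subset_edgeSet he
    simp [hH] at this
    exact this.1
  refine ⟨q.transfer G fun e he => SimpleGraph.mem_edgeFinset.1 (hZ (hqe e he)),
    hq.transfer _, ?_⟩
  intro e he
  simp at he
  exact hqe e he

section
variable {G : SimpleGraph V} {F : Finset (Sym2 V)}

lemma bddBelow_dist (x y : V) :
    BddBelow {n : ℤ | ∃ p : G.Walk x y, p.IsPath ∧ walkWt (F : Set (Sym2 V)) p = n} := by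
  refine ⟨-F.card, ?_⟩
  rintro n ⟨p, hp, rfl⟩
  rw [walkWt_eq p hp.isTrail.edges_nodup, wt_eq]
  omega

lemma dist_le_walk {x y : V} {p : G.Walk x y} (hp : p.IsPath) : distF G F x y ≤ walkWt F p :=
  csInf_le (bddBelow_dist x y) ⟨p, hp, rfl⟩

lemma exists_path_dist {x y : V} (hr : G.Reachable x y) :
    ∃ p : G.Walk x y, p.IsPath ∧ walkWt F p = distF G F x y := by
  obtain ⟨q, hq⟩ := hr.exists_isPath
  exact Int.csInf_mem (s := {n : ℤ | ∃ p : G.Walk x y, p.IsPath ∧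
    walkWt (F : Set (Sym2 V)) p = n}) ⟨_, q, hq, rfl⟩ (bddBelow_dist x y)

/-- The junk value of `distF` between different connected components. -/
lemma dist_unreachable {x y : V} (hr : ¬ G.Reachable x y) : distF G F x y = 0 := by
  have : {n : ℤ | ∃ p : G.Walk x y, p.IsPath ∧ walkWt (F : Set (Sym2 V)) p = n} = ∅ := by
    ext n
    exact iff_of_false (fun ⟨p, _⟩ => hr ⟨p⟩) (Set.notMem_empty n)
  rw [distF, this]; simp

lemma comp_conn {K : Set V} (hc : (G.induce K).Connected) {C : Set V} (hC : C.Nonempty)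
    (hCK : C ⊆ K) (hcl : ∀ x ∈ C, ∀ y ∈ K, G.Adj x y → y ∈ C) : K ⊆ C := by
  obtain ⟨c, hcC⟩ := hC
  intro x hx
  obtain ⟨w⟩ := hc.preconnected ⟨c, hCK hcC⟩ ⟨x, hx⟩
  have key : ∀ {u v : K}, (G.induce K).Walk u v → (u : V) ∈ C → (v : V) ∈ C := by
    intro u v w
    induction w with
    | nil => exact id
    | @cons u v w h p ih => exact fun hu => ih (hcl _ hu _ v.2 h)
  exact key w hcC

end

section
variable [Fintype V] {G : SimpleGraph V} {F : Finset (Sym2 V)}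

/-- The `F`-distance is bounded by the weight of any `{x, y}`-join, as the even remainder left after
removing a path has nonnegative weight. -/
lemma MinJ.dist_le (h : MinJ G F) {Z : Finset (Sym2 V)} (hZ : Z ⊆ G.edgeFinset)
    {x y : V} (hb : bd Z = pt x + pt y) : distF G F x y ≤ wt F Z := by
  obtain ⟨p, hp, hpZ⟩ := exists_path hZ hb
  have hn := hp.isTrail.edges_nodup
  have h1 : distF G F x y ≤ walkWt F p := dist_le_walk hp
  rw [walkWt_eq p hn] at h1
  have h2 := h.even_nonneg (Finset.sdiff_subset.trans hZ) (Z := Z \ p.edges.toFinset) (by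
    rw [bd_sdiff hpZ, hb, bd_walk p hn, vadd_self])
  have h3 := wt_sub (F := F) hpZ
  omega

lemma cost_edges {J : Finset (Sym2 V)} (hJ : J ⊆ G.edgeFinset) :
    cost G.edgeFinset J = J.card := by
  rw [cost, Finset.inter_eq_left.2 hJ]

/-- In a bipartite graph all edges lie in the cut of a colour class, so even sets have even size. -/
lemma bip_even (hbip : G.Colorable 2) {Z : Finset (Sym2 V)} (hZ : Z ⊆ G.edgeFinset)
    (hb : bd Z = 0) : (cost G.edgeFinset Z : ZMod 2) = 0 := by
  obtain ⟨c⟩ := hbip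
  have h1 := cut_parity {v | c v = 0} (loopless hZ)
  have h2 : cut {v | c v = 0} Z = Z := by
    ext e
    refine mem_cut.trans (and_iff_left_of_imp fun he => ?_)
    have he' := SimpleGraph.mem_edgeFinset.1 (hZ he)
    induction e with | _ a b =>
    have hab : c a ≠ c b := c.valid he'
    by_cases ha : c a = 0
    · exact ⟨a, ha, b, fun hb => hab (ha.trans hb.symm), rfl⟩
    · refine ⟨b, ?_, a, ha, Sym2.eq_swap⟩
      change c b = 0
      omega
  rw [h2, hb] at h1
  rw [cost_edges hZ, h1]; simp

/-! ### Distance components as components of level sets -/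

lemma isJ_of_walk (hF : F ⊆ G.edgeFinset) {r x : V} {Z : Finset (Sym2 V)}
    (hZ : Z ⊆ G.edgeFinset) (hb : bd Z = pt r + pt x) :
    IsJ G.edgeFinset (bd F + pt r) x (F ∆ Z) :=
  ⟨symmDiff_subset' hF hZ, by rw [bd_symmDiff, hb, add_assoc]⟩

lemma IsJ.bd_symmDiff {r x : V} {J : Finset (Sym2 V)}
    (hJ : IsJ G.edgeFinset (bd F + pt r) x J) : bd (F ∆ J) = pt r + pt x := by
  rw [TightCuts.bd_symmDiff, hJ.2, ← add_assoc, ← add_assoc, vadd_self, zero_add]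

lemma IsJ.reachable (hF : F ⊆ G.edgeFinset) {r x : V} {J : Finset (Sym2 V)}
    (hJ : IsJ G.edgeFinset (bd F + pt r) x J) : G.Reachable r x := by
  obtain ⟨p, -⟩ := exists_path (symmDiff_subset' hF hJ.1) hJ.bd_symmDiff
  exact ⟨p⟩

lemma MinJ.dist_le_card (h : MinJ G F) {r x : V} {J : Finset (Sym2 V)}
    (hJ : IsJ G.edgeFinset (bd F + pt r) x J) : distF G F r x ≤ J.card - F.card := by
  have := h.dist_le (symmDiff_subset' h.sub hJ.1) hJ.bd_symmDiff
  rwa [wt_eq, symmDiff_symmDiff_cancel_left] at this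

/-- Level sets of join costs are level sets of the `F`-distance, shifted by `|F|`. -/
lemma MinJ.mem_lev (h : MinJ G F) {r x : V} {l : ℕ} :
    x ∈ lev G.edgeFinset G.edgeFinset (bd F + pt r) l ↔
      G.Reachable r x ∧ distF G F r x ≤ l - F.card := by
  constructor
  · rintro ⟨J, hJ, hl⟩
    have := h.dist_le_card hJ
    rw [cost_edges hJ.1] at hl
    exact ⟨hJ.reachable h.sub, by omega⟩
  · rintro ⟨hr, hd⟩
    obtain ⟨p, hp, hw⟩ := exists_path_dist (F := F) hr
    have hn := hp.isTrail.edges_nodup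
    have hJ := isJ_of_walk h.sub (walk_sub p) (bd_walk p hn)
    refine ⟨_, hJ, ?_⟩
    rw [cost_edges hJ.1]
    rw [walkWt_eq p hn, wt_eq] at hw
    omega

lemma MinJ.isJ_min (h : MinJ G F) {r x : V} {p : G.Walk r x} (hp : p.IsPath)
    (hw : walkWt F p = distF G F r x) :
    ∀ J', IsJ G.edgeFinset (bd F + pt r) x J' →
      cost G.edgeFinset (F ∆ p.edges.toFinset) ≤ cost G.edgeFinset J' := by
  intro J' hJ'
  have hn := hp.isTrail.edges_nodup
  have h1 := h.dist_le_card hJ'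
  rw [cost_edges hJ'.1, cost_edges (symmDiff_subset' h.sub (walk_sub p))]
  rw [walkWt_eq p hn, wt_eq] at hw
  omega

/-- The claim for a finset `F` that is smallest among the edge sets with its boundary. -/
theorem main_aux (hbip : G.Colorable 2) (h : MinJ G F)
    (r : V) (K : Set V) (hK : IsDecapDistComp G F r K)
    (rK sK : V) (hadj : G.Adj rK sK) (hbeam : s(rK, sK) ∈ F)
    (hrK : rK ∈ K) (hsK : sK ∉ K) :
    IsComponentOf G {x | distF G F sK x ≤ -1} K ∧ IsDecapDistComp G F sK K := by
  obtain ⟨i, ⟨-, hne, hsub, hconn, hclosed⟩, hrnK⟩ := hK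
  have hsub' : ∀ x ∈ K, distF G F r x ≤ i := fun x hx => hsub hx
  have hclosed' : ∀ x ∈ K, ∀ y, distF G F r y ≤ i → G.Adj x y → y ∈ K :=
    fun x hx y hy => hclosed x hx y hy
  have hE : ∀ {x y : V}, s(x, y) ∈ G.edgeFinset ↔ G.Adj x y := fun {x y} => by
    rw [SimpleGraph.mem_edgeFinset, SimpleGraph.mem_edgeSet]
  -- if `r` were in another component of `G`, both `rK` and `sK` would have the junk distance 0
  have hrrK : G.Reachable r rK := by
    by_contra hr
    have hr' : ¬ G.Reachable r sK := fun h' => hr (h'.trans hadj.symm.reachable)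
    have h1 := hsub' rK hrK
    rw [dist_unreachable hr] at h1
    exact hsK (hclosed' rK hrK sK (by rwa [dist_unreachable hr']) hadj)
  have hreach : ∀ x ∈ K, G.Reachable r x := by
    have := comp_conn hconn (C := {x ∈ K | G.Reachable r x}) ⟨rK, hrK, hrrK⟩ (fun x hx => hx.1)
      (fun x hx y hy hxy => ⟨hy, hx.2.trans hxy.reachable⟩)
    exact fun x hx => (this hx).2
  obtain ⟨l, hl⟩ : ∃ l : ℕ, (l : ℤ) = F.card + i := by
    obtain ⟨p, hp, hw⟩ := exists_path_dist (F := F) hrrK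
    rw [walkWt_eq p hp.isTrail.edges_nodup, wt_eq] at hw
    have := hsub' rK hrK
    exact ⟨(F.card + i).toNat, by omega⟩
  have hlev : ∀ {x}, x ∈ lev G.edgeFinset G.edgeFinset (bd F + pt r) l ↔
      G.Reachable r x ∧ distF G F r x ≤ i := fun {x} => by
    rw [h.mem_lev, hl, add_sub_cancel_left]
  have hcomp : Comp G.edgeFinset (lev G.edgeFinset G.edgeFinset (bd F + pt r) l) K :=
    { nonempty := hne
      sub := fun x hx => hlev.2 ⟨hreach x hx, hsub' x hx⟩
      closed := fun x hx y hy he => hclosed' x hx y (hlev.1 hy).2 (hE.1 he)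
      conn := fun C hCK hC hcl => comp_conn hconn hC hCK fun x hx y hy hxy =>
        hcl x hx y hy (hE.2 hxy) }
  have hS := sebo (loopless subset_rfl) l _ subset_rfl (fun Z hZ hb => bip_even hbip hZ hb) K hcomp
  have hout : ∀ x ∈ K, ∀ y, y ∉ K → G.Adj x y →
      y ∉ lev G.edgeFinset G.edgeFinset (bd F + pt r) l := fun x hx y hy hxy hy' =>
    hy (hclosed' x hx y (hlev.1 hy').2 hxy)
  have hFJ : IsJ G.edgeFinset (bd F + pt r) r F :=
    ⟨h.sub, by rw [add_assoc, vadd_self, add_zero]⟩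
  obtain ⟨hF1, hF2⟩ := hS r F hFJ fun J' hJ' => by
    rw [cost_edges hJ'.1, cost_edges h.sub]
    exact h.min J' hJ'.1 (by rw [hJ'.2, add_assoc, vadd_self, add_zero])
  have hbc : s(rK, sK) ∈ cut K F := mem_cut.2 ⟨hbeam, rK, hrK, sK, hsK, rfl⟩
  have hbE : s(rK, sK) ∈ G.edgeFinset := hE.2 hadj
  have hsd : i + 1 ≤ distF G F r sK := by
    by_contra! hlt
    exact hsK (hclosed' rK hrK sK (by omega) hadj)
  have hneg : ∀ x ∈ K, distF G F sK x ≤ -1 := by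
    intro x hx
    obtain ⟨p, hp, hw⟩ := exists_path_dist (F := F) (hreach x hx)
    have hn := hp.isTrail.edges_nodup
    have hPE := walk_sub p
    have hJ := isJ_of_walk h.sub hPE (bd_walk p hn)
    have hJ1 := (hS x _ hJ (h.isJ_min hp hw)).1
    have hpar2 := cut_parity K (loopless h.sub)
    have hparJ := cut_parity K (loopless hJ.1)
    rw [bd_symmDiff, bd_walk p hn] at hparJ
    simp only [Pi.add_apply, Finset.sum_add_distrib, sum_pt, hrnK, hx, if_true, if_false,
      zero_add] at hparJ
    have hF3 : (cut K F).card = 1 := le_antisymm hF1 (Finset.card_pos.2 ⟨_, hbc⟩)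
    rw [← hpar2, hF3] at hparJ
    -- `F ∆ p` is a minimum `x`-join meeting the cut of `K` at most once and an even number of times
    have hJ0 : (cut K (F ∆ p.edges.toFinset)).card = 0 := by
      by_contra hne
      have : (cut K (F ∆ p.edges.toFinset)).card = 1 := by omega
      rw [this] at hparJ
      revert hparJ; decide
    -- so the beam lies on `p`, and `p` passes through `sK`
    have hbP : s(rK, sK) ∈ p.edges := by
      by_contra hbP
      have : s(rK, sK) ∈ cut K (F ∆ p.edges.toFinset) := mem_cut.2
        ⟨Finset.mem_symmDiff.2 (Or.inl ⟨hbeam, by simpa using hbP⟩), rK, hrK, sK, hsK, rfl⟩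
      rw [Finset.card_eq_zero.1 hJ0] at this
      simp at this
    have hsP : sK ∈ p.support := p.snd_mem_support_of_mem_edges hbP
    have h1 : walkWt F p = walkWt (F : Set (Sym2 V)) (p.takeUntil sK hsP)
        + walkWt (F : Set (Sym2 V)) (p.dropUntil sK hsP) := by
      conv_lhs => rw [← p.take_spec hsP]
      rw [walkWt, Walk.edges_append, List.map_append, List.sum_append]
      rfl
    have h2 := dist_le_walk (F := F) (hp.takeUntil hsP)
    have h3 := dist_le_walk (F := F) (hp.dropUntil hsP)
    have h4 := hsub' x hx
    omega
  -- a vertex `y` violating maximality would be an outer neighbour of `K` like `sK`, and switching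
  -- `F` along a negative path from `sK` to `y` would improve it
  have hcompK : IsComponentOf G {x | distF G F sK x ≤ -1} K := by
    refine ⟨hne, hneg, hconn, fun x hx y hy hxy => ?_⟩
    have hy' : distF G F sK y ≤ -1 := hy
    by_contra hyK
    have hr : G.Reachable sK y := by
      by_contra hr
      rw [dist_unreachable hr] at hy'
      omega
    obtain ⟨p, hp, hw⟩ := exists_path_dist (F := F) hr
    have hn := hp.isTrail.edges_nodup
    have h1 := hF2 sK y (hout rK hrK sK hsK hadj) (hout x hx y hyK hxy) ⟨rK, hrK, hbE⟩
      ⟨x, hx, hE.2 hxy⟩ _ (walk_sub p) (bd_walk p hn)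
    rw [cost_edges h.sub, cost_edges (symmDiff_subset' h.sub (walk_sub p))] at h1
    rw [walkWt_eq p hn, wt_eq] at hw
    omega
  -- a path of weight at most -2 from `sK` to `rK` would yield an even set of negative weight
  -- together with the beam
  refine ⟨hcompK, -1, ⟨⟨rK, le_antisymm (hneg rK hrK) ?_⟩, hcompK⟩, hsK⟩
  obtain ⟨p, hp, hw⟩ := exists_path_dist (F := F) hadj.symm.reachable
  have hn := hp.isTrail.edges_nodup
  have h1 := h.even_nonneg (symmDiff_subset' (walk_sub p) (Finset.singleton_subset_iff.2 hbE)) (by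
    rw [bd_symmDiff, bd_walk p hn, bd_edge hadj.ne, add_comm (pt sK), vadd_self])
  rw [walkWt_eq p hn, wt_eq] at hw
  rw [wt_eq, ← symmDiff_assoc] at h1
  have h2 := cost_edge_le G.edgeFinset (F ∆ p.edges.toFinset) s(rK, sK)
  have h3 := symmDiff_subset' h.sub (walk_sub p)
  rw [cost_edges h3, cost_edges (symmDiff_subset' h3 (Finset.singleton_subset_iff.2 hbE))] at h2
  omega
end

end Walks

/-- If `K` is a decapital distance component w.r.t. `r` with
`F`-antiroot `sK`, then `K` is a connected component of the subgraph of `G`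
induced by `{x | dist_F(sK, x) ≤ -1}`; in particular, `K` is a decapital
distance component w.r.t. `sK`. -/
theorem stmt_7 {V : Type*} [Fintype V] [DecidableEq V]
    (G : SimpleGraph V) (T : Set V) (hbip : G.Colorable 2) (hgraft : IsGraft G T)
    (F : Set (Sym2 V)) (hF : IsMinJoin G T F)
    (r : V) (K : Set V) (hK : IsDecapDistComp G F r K)
    (rK sK : V) (hadj : G.Adj rK sK) (hbeam : s(rK, sK) ∈ F)
    (hrK : rK ∈ K) (hsK : sK ∉ K) :
    IsComponentOf G {x | distF G F sK x ≤ -1} K ∧ IsDecapDistComp G F sK K := by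
  lift F to Finset (Sym2 V) using Set.toFinite F
  exact main_aux hbip hF.minJ r K hK rK sK hadj hbeam hrK hsK
end TightCuts
end

section
/- Let (G,T) be a bipartite graft and F a minimum join of (G,T). Then for every edge xy ∈ F, there exists a connected component K of the subgraph of G induced by {z ∈ V(G) : dist_F(y, z) ≤ −1} such that x ∈ V(K) and y ∉ V(K). -/
/-!
The component in question is the one containing `x`. The single edge `xy` of `F` is a path of
weight `-1`, so `dist_F(y, x) ≤ -1`, while the only path from `y` to itself is the trivial one,
so `dist_F(y, y) = 0` and `y` lies in no component at all. Since `distF` is an infimum in `ℤ`,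
the first inequality needs a lower bound on path weights: the weight of a path is at least minus
its length, which is less than the number of vertices.
-/

namespace TightCuts

open SimpleGraph

variable {V : Type*}

theorem neg_length_le_walkWt {V : Type*} {G : SimpleGraph V} (F : Set (Sym2 V)) {x y : V}
    (p : G.Walk x y) : -(p.length : ℤ) ≤ walkWt F p := by
  induction p with
  | nil => simp [walkWt]
  | @cons u v w h p ih =>
    have hw : -1 ≤ edgeWt F s(u, v) := by
      unfold edgeWt
      split_ifs <;> norm_num
    simp only [walkWt, Walk.edges_cons, List.map_cons, List.sum_cons, Walk.length_cons] at ih ⊢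
    push_cast
    linarith

/-- In a finite graph, `distF` is a lower bound for path weights; finiteness rules out the junk
value of `sInf` on an unbounded set. -/
theorem distF_le_walkWt {V : Type*} [Fintype V] {G : SimpleGraph V} (F : Set (Sym2 V)) {x y : V}
    (p : G.Walk x y) (hp : p.IsPath) : distF G F x y ≤ walkWt F p := by
  refine csInf_le ⟨-(Fintype.card V : ℤ), ?_⟩ ⟨p, hp, rfl⟩
  rintro _ ⟨q, hq, rfl⟩
  have h1 := neg_length_le_walkWt F q
  have h2 := hq.length_lt
  omega

theorem distF_self {V : Type*} (G : SimpleGraph V) (F : Set (Sym2 V)) (y : V) :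
    distF G F y y = 0 := by
  have h : {n : ℤ | ∃ p : G.Walk y y, p.IsPath ∧ walkWt F p = n} = {0} := by
    ext n
    constructor
    · rintro ⟨p, hp, rfl⟩
      simp [(Walk.isPath_iff_nil.mp hp).eq_nil, walkWt]
    · rintro rfl
      exact ⟨Walk.nil, Walk.IsPath.nil, by simp [walkWt]⟩
  rw [distF, h, csInf_singleton]

/-- Every vertex of `U` lies in a component of `G[U]`: the set of vertices reached from it by
walks inside `U`. -/
theorem exists_isComponentOf {V : Type*} (G : SimpleGraph V) {U : Set V} {x : V} (hx : x ∈ U) :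
    ∃ K, IsComponentOf G U K ∧ x ∈ K := by
  let K : Set V := {z | ∃ p : G.Walk x z, ∀ v ∈ p.support, v ∈ U}
  have hxK : x ∈ K := ⟨Walk.nil, by simpa using hx⟩
  refine ⟨K, ⟨⟨x, hxK⟩, ?_, ?_, ?_⟩, hxK⟩
  · rintro z ⟨p, hp⟩
    exact hp z p.end_mem_support
  · refine G.induce_connected_of_patches x hxK ?_
    rintro z ⟨p, hp⟩
    refine ⟨{v | v ∈ p.support}, ?_, p.start_mem_support, p.end_mem_support,
      p.connected_induce_support.preconnected _ _⟩
    classical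
    intro v hv
    exact ⟨p.takeUntil v hv, fun w hw => hp w (p.support_takeUntil_subset_support hv hw)⟩
  · rintro z ⟨p, hp⟩ w hw hzw
    refine ⟨p.concat hzw, fun v hv => ?_⟩
    rw [Walk.support_concat] at hv
    simp only [List.mem_append, List.mem_singleton] at hv
    rcases hv with hv | rfl
    · exact hp v hv
    · exact hw

/-- For a bipartite graft `(G, T)` and a minimum join `F`: for every
edge `xy ∈ F`, there is a connected component `K` of the subgraph of `G` induced
by `{z | dist_F(y, z) ≤ -1}` with `x ∈ K` and `y ∉ K`. -/
theorem stmt_8 {V : Type*} [Fintype V] [DecidableEq V]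
    (G : SimpleGraph V) (T : Set V) (hbip : G.Colorable 2) (hgraft : IsGraft G T)
    (F : Set (Sym2 V)) (hF : IsMinJoin G T F) :
    ∀ x y : V, s(x, y) ∈ F →
      ∃ K : Set V, IsComponentOf G {z | distF G F y z ≤ -1} K ∧ x ∈ K ∧ y ∉ K := by
  intro x y hxy
  have hadj : G.Adj y x := (G.mem_edgeSet.mp (hF.1.1 hxy)).symm
  have hx : x ∈ {z | distF G F y z ≤ -1} := by
    have h := distF_le_walkWt F hadj.toWalk (Walk.IsPath.of_adj hadj)
    have hw : walkWt F hadj.toWalk = -1 := by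
      rw [Sym2.eq_swap] at hxy
      simp [walkWt, edgeWt, hxy]
    rwa [hw] at h
  obtain ⟨K, hK, hxK⟩ := exists_isComponentOf G hx
  refine ⟨K, hK, hxK, fun hyK => ?_⟩
  have hy : distF G F y y ≤ -1 := hK.2.1 hyK
  rw [distF_self] at hy
  omega
end TightCuts
end
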